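/- Let q > 3 be a prime power and let 3 ≤ h < k be integers. Let D_4 = { x ∈ 𝔽_q^k \ {0} : x_1·⋯·x_h = 0 }, n = #D_4 = q^{k−h}(q^h − (q−1)^h) − 1, and for a linear form f on 𝔽_q^k and b ∈ 𝔽_q set W(f,b) := #{ x ∈ D_4 : f(x) ≠ 0 } + #{ x ∈ D_4 : f(x) + b ≠ 0 }. Set w := n − q^{k−1} + q^{k−h−1}(q−1)^h + 1 and, for s ∈ {1,…,h}, w_s := n − q^{k−1} + q^{k−h}(q−1)^{h−s}ψ_s + 1. Then the values 0, n, 2w, n + w(q−2)/(q−1), and 2w_s, n + w_s(q−2)/(q−1) for s = 1, …, h are pairwise distinct, and the number of pairs (f,b) with W(f,b) = i is: 1 for i = 0; q − 1 for i = n; C(h,s)(q−1)^s for i = 2w_s (each s = 1,…,h); C(h,s)(q−1)^{s+1} for i = n + w_s(q−2)/(q−1) (each s = 1,…,h); q^k − q^h for i = 2w; and (q^k − q^h)(q−1) for i = n + w(q−2)/(q−1); and W(f,b) takes no other values. -/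

import Mathlib

/-- `ψ_s = ((q-1)^s + (-1)^s (q-1))/q` (an exact integer division). -/
def psi (q s : ℕ) : ℤ := (((q : ℤ) - 1) ^ s + (-1) ^ s * ((q : ℤ) - 1)) / (q : ℤ)

/-!
Over `𝔽_q^*` a nontrivial additive character sums to `-1`, so its sum over the values of a form `f`
on the vectors without zeros among the first `h` coordinates factors into known one-variable sums
and depends only on the support type of `f`. By Fourier inversion a form takes every nonzero value
equally often, say `X` times, on `D₄`; hence `W(f, 0) = 2(q-1)X` and `W(f, b) = n + (q-2)X` for
`b ≠ 0`, and pairs are counted by the support of `f`.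

The count `X` is injective in the support type, and Bernoulli's inequality gives `n < 2(q-1)X` for
`f ≠ 0`. For nonzero forms, a coincidence `2(q-1)X = n + (q-2)X'` is excluded modulo `q^(k-h-1)`,
which divides `X`, `X'` and `n + 1`, unless `k = h + 1`; in that case it is excluded modulo `q - 1`.
-/

open Finset
open Fintype (piFinset mem_piFinset card_piFinset)

section CharacterSums

theorem addChar_dotProduct {ι F R : Type*} [Fintype ι] [CommSemiring F] [CommSemiring R]
    (ψ : AddChar F R) (a x : ι → F) : ψ (a ⬝ᵥ x) = ∏ i, ψ (x i * a i) := by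
  simp only [dotProduct, mul_comm (a _)]
  exact map_prod ψ.toMonoidHom (fun i => Multiplicative.ofAdd (x i * a i)) univ

theorem sum_piFinset_addChar_dotProduct {ι F R : Type*} [Fintype ι] [DecidableEq ι]
    [CommSemiring F] [CommSemiring R] (ψ : AddChar F R) (A : ι → Finset F) (a : ι → F) :
    ∑ x ∈ piFinset A, ψ (a ⬝ᵥ x) = ∏ i, ∑ y ∈ A i, ψ (y * a i) := by
  simp_rw [addChar_dotProduct, prod_univ_sum]

variable {F R : Type*} [CommRing F] [Fintype F] [DecidableEq F] [CommRing R] [IsDomain R]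
  {ψ : AddChar F R}

theorem sum_erase_zero_mulShift (hψ : ψ.IsPrimitive) (b : F) :
    ∑ x ∈ univ.erase 0, ψ (x * b) = if b = 0 then (Fintype.card F : R) - 1 else -1 := by
  rw [sum_erase_eq_sub (mem_univ 0), AddChar.sum_mulShift b hψ]
  split_ifs <;> simp

theorem card_mul_card_fiber_eq_sum {α : Type*} (hψ : ψ.IsPrimitive) (S : Finset α) (g : α → F)
    (c : F) :
    (Fintype.card F : R) * #{x ∈ S | g x = c} = ∑ t, ψ (t * -c) * ∑ x ∈ S, ψ (t * g x) := by
  simp_rw [mul_sum, ← AddChar.map_add_eq_mul, ← mul_add, neg_add_eq_sub]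
  rw [sum_comm]
  simp_rw [AddChar.sum_mulShift _ hψ, sub_eq_zero]
  rw [← Nat.cast_sum, ← sum_filter, sum_const, smul_eq_mul, mul_comm, Nat.cast_mul]

end CharacterSums

section SupportType

/-- The set of indices of the nonzero coordinates of a vector, as a `Finset`. -/
def supportFinset {ι F : Type*} [Fintype ι] [Zero F] [DecidableEq F] (a : ι → F) : Finset ι :=
  {i | a i ≠ 0}

theorem mem_supportFinset {ι F : Type*} [Fintype ι] [Zero F] [DecidableEq F] {a : ι → F} {i : ι} :
    i ∈ supportFinset a ↔ a i ≠ 0 := by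
  simp [supportFinset]

/-- The invariant of a vector `a` that determines how many vectors with a vanishing coordinate in
`H` lie in the hyperplane `a ⬝ᵥ x = c`: the number of nonzero coordinates of `a` if they all lie in
`H`, and otherwise `#H + 1`, a value that does not occur in the first case. -/
def supportType {ι F : Type*} [Fintype ι] [DecidableEq ι] [Zero F] [DecidableEq F]
    (H : Finset ι) (a : ι → F) : ℕ :=
  if supportFinset a ⊆ H then #(supportFinset a) else #H + 1

variable {ι F : Type*} [Fintype ι] [DecidableEq ι] [DecidableEq F]

theorem supportType_smul [MulZeroClass F] [NoZeroDivisors F] (H : Finset ι) (a : ι → F) {t : F}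
    (ht : t ≠ 0) : supportType H (t • a) = supportType H a := by
  have hsupp : supportFinset (t • a) = supportFinset a := by
    ext i
    simp [mem_supportFinset, ht]
  rw [supportType, supportType, hsupp]

variable [Zero F] {H : Finset ι} {a : ι → F}

theorem supportType_le (H : Finset ι) (a : ι → F) : supportType H a ≤ #H + 1 := by
  unfold supportType
  split_ifs with h
  · exact (card_le_card h).trans (Nat.le_succ _)
  · exact le_rfl

theorem supportType_eq_iff_of_le {j : ℕ} (hj : j ≤ #H) :
    supportType H a = j ↔ supportFinset a ∈ powersetCard j H := by
  rw [mem_powersetCard, supportType]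
  split_ifs with h
  · simp only [h, true_and]
  · simp only [h, false_and, iff_false]
    lia

theorem supportType_eq_succ_iff : supportType H a = #H + 1 ↔ ¬ supportFinset a ⊆ H := by
  unfold supportType
  split_ifs with h
  · have := card_le_card h
    simp only [h, not_true, iff_false]
    lia
  · simp only [h, not_false_eq_true]

theorem supportType_eq_zero_iff : supportType H a = 0 ↔ a = 0 := by
  rw [supportType_eq_iff_of_le (Nat.zero_le _), powersetCard_zero, mem_singleton,
    eq_empty_iff_forall_notMem, funext_iff]
  simp only [mem_supportFinset, not_not, Pi.zero_apply]

theorem supportType_empty (ha : a ≠ 0) : supportType ∅ a = 1 :=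
  (supportType_le ∅ a).antisymm (Nat.one_le_iff_ne_zero.mpr (supportType_eq_zero_iff.not.mpr ha))

variable [Fintype F]

theorem card_filter_supportFinset_eq (S : Finset ι) :
    #{a : ι → F | supportFinset a = S} = (Fintype.card F - 1) ^ #S := by
  have hbox : ({a | supportFinset a = S} : Finset (ι → F))
      = piFinset fun i => if i ∈ S then univ.erase 0 else {0} := by
    ext a
    simp only [mem_filter_univ, mem_piFinset, Finset.ext_iff, mem_supportFinset]
    refine forall_congr' fun i => ?_
    split_ifs with hi <;> simp [hi]
  simp_rw [hbox, card_piFinset, apply_ite Finset.card, card_erase_of_mem (mem_univ _),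
    card_singleton, card_univ, prod_ite_mem, univ_inter, prod_const]

theorem card_filter_supportType_eq (H : Finset ι) {j : ℕ} (hj : j ≤ #H) :
    #{a : ι → F | supportType H a = j} = (#H).choose j * (Fintype.card F - 1) ^ j := by
  have hfiber : ∀ S ∈ powersetCard j H,
      #{a ∈ ({a | supportType H a = j} : Finset (ι → F)) | supportFinset a = S}
        = (Fintype.card F - 1) ^ j := by
    intro S hS
    rw [← (mem_powersetCard.mp hS).2, ← card_filter_supportFinset_eq, filter_filter,
      (mem_powersetCard.mp hS).2]
    refine congrArg _ (filter_congr fun a _ => and_iff_right_of_imp ?_)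
    rintro rfl
    exact (supportType_eq_iff_of_le hj).mpr hS
  rw [card_eq_sum_card_fiberwise fun a ha => (supportType_eq_iff_of_le hj).mp (mem_filter.mp ha).2,
    sum_congr rfl hfiber, sum_const, card_powersetCard, smul_eq_mul]

theorem card_filter_supportType_eq_succ (H : Finset ι) :
    #{a : ι → F | supportType H a = #H + 1}
      = Fintype.card F ^ Fintype.card ι - Fintype.card F ^ #H := by
  have hbox : ({a | supportFinset a ⊆ H} : Finset (ι → F))
      = piFinset fun i => if i ∈ H then univ else {0} := by
    ext a
    simp only [mem_filter_univ, mem_piFinset, subset_iff, mem_supportFinset]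
    refine forall_congr' fun i => ?_
    split_ifs with hi <;> simp [hi]
  simp_rw [supportType_eq_succ_iff]
  rw [← compl_filter, card_compl, hbox, Fintype.card_fun, card_piFinset]
  simp_rw [apply_ite Finset.card, card_singleton, card_univ, prod_ite_mem, univ_inter, prod_const]

end SupportType

section VanishingVectors

/-- The sum of a nontrivial additive character over the values of the form `x ↦ a ⬝ᵥ x` on the
vectors `x` without zeros in an `h`-element set, divided by `q` for every other coordinate, where
`j` is the support type of `a`. -/
def charSumValue (q : ℤ) (h j : ℕ) : ℤ := if j = h + 1 then 0 else (-1) ^ j * (q - 1) ^ (h - j)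

/-- The number `n` of nonzero vectors in `𝔽_q^k` with a zero among `h` given coordinates. -/
def vanishingLength (q : ℤ) (k h : ℕ) : ℤ := q ^ (k - h) * (q ^ h - (q - 1) ^ h) - 1

/-- The number of vectors with a zero among `h` given coordinates on which a form of support type
`j` takes a given nonzero value. -/
def levelSize (q : ℤ) (k h j : ℕ) : ℤ :=
  if j = 0 then 0 else q ^ (k - h - 1) * (q ^ h - (q - 1) ^ h + charSumValue q h j)

/-- The vectors without zeros in `H`. -/
def nonvanishingVectors {ι : Type*} (F : Type*) [Fintype ι] [DecidableEq ι] [Zero F] [Fintype F]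
    [DecidableEq F] (H : Finset ι) : Finset (ι → F) :=
  piFinset fun i => if i ∈ H then univ.erase 0 else univ

/-- The defining set `D₄`: the nonzero vectors with a zero in `H`. -/
def vanishingVectors {ι : Type*} (F : Type*) [Fintype ι] [DecidableEq ι] [Zero F] [Fintype F]
    [DecidableEq F] (H : Finset ι) : Finset (ι → F) :=
  {x | x ≠ 0 ∧ ∃ i ∈ H, x i = 0}

variable {ι F : Type*} [Fintype ι] [DecidableEq ι] [Fintype F] [DecidableEq F]

theorem mem_nonvanishingVectors [Zero F] {H : Finset ι} {x : ι → F} :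
    x ∈ nonvanishingVectors F H ↔ ∀ i ∈ H, x i ≠ 0 := by
  simp only [nonvanishingVectors, mem_piFinset]
  refine forall_congr' fun i => ?_
  split_ifs with hi <;> simp [hi]

theorem vanishingVectors_eq_erase_compl [Zero F] (H : Finset ι) :
    vanishingVectors F H = (nonvanishingVectors F H)ᶜ.erase 0 := by
  ext x
  simp [vanishingVectors, mem_nonvanishingVectors]

theorem card_nonvanishingVectors [Zero F] (H : Finset ι) :
    #(nonvanishingVectors F H)
      = Fintype.card F ^ (Fintype.card ι - #H) * (Fintype.card F - 1) ^ #H := by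
  simp_rw [nonvanishingVectors, card_piFinset, apply_ite Finset.card,
    card_erase_of_mem (mem_univ (0 : F)), card_univ]
  rw [← prod_mul_prod_compl H, prod_congr rfl fun i hi => if_pos hi,
    prod_congr rfl fun i hi => if_neg (mem_compl.mp hi), prod_const, prod_const, card_compl,
    mul_comm]

theorem card_vanishingVectors [Zero F] {H : Finset ι} (hH : H.Nonempty) :
    (#(vanishingVectors F H) : ℤ) = vanishingLength (Fintype.card F) (Fintype.card ι) #H := by
  have hzero : (0 : ι → F) ∈ (nonvanishingVectors F H)ᶜ := by
    obtain ⟨i, hi⟩ := hH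
    exact mem_compl.mpr fun h => mem_nonvanishingVectors.mp h i hi rfl
  have hpow : (Fintype.card F : ℤ) ^ Fintype.card ι
      = (Fintype.card F : ℤ) ^ (Fintype.card ι - #H) * (Fintype.card F : ℤ) ^ #H := by
    rw [← pow_add, Nat.sub_add_cancel (card_le_univ H)]
  have hcompl := card_add_card_compl (nonvanishingVectors F H)
  rw [← card_erase_add_one hzero, ← vanishingVectors_eq_erase_compl, card_nonvanishingVectors,
    Fintype.card_fun] at hcompl
  zify [Nat.one_le_iff_ne_zero.mpr Fintype.card_ne_zero] at hcompl
  rw [vanishingLength]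
  linear_combination hcompl + hpow

theorem card_vanishingVectors_fiber_add [NonUnitalNonAssocSemiring F] (H : Finset ι)
    (a : ι → F) {c : F} (hc : c ≠ 0) :
    #{x ∈ vanishingVectors F H | a ⬝ᵥ x = c} + #{x ∈ nonvanishingVectors F H | a ⬝ᵥ x = c}
      = #{x ∈ nonvanishingVectors F ∅ | a ⬝ᵥ x = c} := by
  have huniv : nonvanishingVectors F (∅ : Finset ι) = univ :=
    eq_univ_of_forall fun x => mem_nonvanishingVectors.mpr fun i hi => absurd hi (notMem_empty i)
  rw [huniv, ← card_filter_add_card_filter_not (s := {x | a ⬝ᵥ x = c})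
    (· ∈ nonvanishingVectors F H), add_comm]
  congr 2 <;> ext x
  · simp only [mem_filter, mem_univ, true_and, and_comm]
  · simp only [mem_filter, mem_univ, true_and, vanishingVectors_eq_erase_compl, mem_erase,
      mem_compl]
    rw [and_comm]
    refine and_congr_right fun hx => and_iff_right ?_
    rintro rfl
    exact hc (hx.symm.trans (dotProduct_zero a))

variable [Field F]

theorem sum_nonvanishingVectors_addChar {R : Type*} [CommRing R] [IsDomain R] {ψ : AddChar F R}
    (hψ : ψ.IsPrimitive) (H : Finset ι) (a : ι → F) :
    ∑ x ∈ nonvanishingVectors F H, ψ (a ⬝ᵥ x)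
      = (Fintype.card F : R) ^ (Fintype.card ι - #H)
        * (charSumValue (Fintype.card F) #H (supportType H a) : R) := by
  have hin : ∏ i ∈ H, ∑ y ∈ univ.erase 0, ψ (y * a i)
      = (-1) ^ #{i ∈ H | a i ≠ 0} * ((Fintype.card F : R) - 1) ^ #{i ∈ H | ¬ a i ≠ 0} := by
    simp_rw [sum_erase_zero_mulShift hψ, ← ite_not (a _ = 0)]
    rw [prod_ite, prod_const, prod_const]
  have hout : ∏ i ∈ Hᶜ, ∑ y, ψ (y * a i)
      = if supportFinset a ⊆ H then (Fintype.card F : R) ^ (Fintype.card ι - #H) else 0 := by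
    simp_rw [AddChar.sum_mulShift _ hψ, Nat.cast_ite, Nat.cast_zero]
    rw [prod_ite_zero, prod_const, card_compl]
    congr 1
    simp only [mem_compl, subset_iff, mem_supportFinset, not_imp_comm]
  rw [nonvanishingVectors, sum_piFinset_addChar_dotProduct, ← prod_mul_prod_compl H,
    prod_congr rfl fun i hi => congrArg (∑ y ∈ ·, ψ (y * a i)) (if_pos hi),
    prod_congr rfl fun i hi => congrArg (∑ y ∈ ·, ψ (y * a i)) (if_neg (mem_compl.mp hi)),
    hin, hout]
  split_ifs with h
  · have hinter : ({i ∈ H | a i ≠ 0} : Finset ι) = supportFinset a := by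
      ext i
      simpa [mem_supportFinset] using fun hi => h (mem_supportFinset.mpr hi)
    have hcard := card_filter_add_card_filter_not (s := H) fun i => a i ≠ 0
    rw [hinter] at hcard ⊢
    rw [supportType, if_pos h, charSumValue, if_neg (by lia), ← hcard, Nat.add_sub_cancel_left]
    push_cast
    ring
  · rw [supportType_eq_succ_iff.mpr h, charSumValue, if_pos rfl, Int.cast_zero, mul_zero, mul_zero]

theorem card_mul_card_nonvanishingVectors_fiber (H : Finset ι) (a : ι → F) {c : F}
    (hc : c ≠ 0) :
    (Fintype.card F : ℤ) * #{x ∈ nonvanishingVectors F H | a ⬝ᵥ x = c}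
      = (Fintype.card F : ℤ) ^ (Fintype.card ι - #H)
        * (((Fintype.card F : ℤ) - 1) ^ #H
          - charSumValue (Fintype.card F) #H (supportType H a)) := by
  set ψ := AddChar.FiniteField.primitiveChar_to_Complex F
  have hψ : ψ.IsPrimitive := AddChar.FiniteField.primitiveChar_to_Complex_isPrimitive F
  have hsum : ∀ t ∈ univ.erase (0 : F), ψ (t * -c) * ∑ x ∈ nonvanishingVectors F H, ψ (t * a ⬝ᵥ x)
      = ψ (t * -c) * ((Fintype.card F : ℂ) ^ (Fintype.card ι - #H)
        * charSumValue (Fintype.card F) #H (supportType H a)) := by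
    intro t ht
    rw [← supportType_smul H a (ne_of_mem_erase ht), ← sum_nonvanishingVectors_addChar hψ]
    simp_rw [smul_dotProduct, smul_eq_mul]
  have key := card_mul_card_fiber_eq_sum hψ (nonvanishingVectors F H) (a ⬝ᵥ ·) c
  rw [← add_sum_erase _ _ (mem_univ 0), sum_congr rfl hsum, ← sum_mul,
    sum_erase_zero_mulShift hψ, if_neg (neg_ne_zero.mpr hc)] at key
  simp only [zero_mul, AddChar.map_zero_eq_one, sum_const, card_nonvanishingVectors,
    nsmul_one] at key
  rw [← Int.cast_inj (α := ℂ)]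
  push_cast [Nat.cast_sub Fintype.card_pos] at key ⊢
  linear_combination key

theorem card_vanishingVectors_fiber {H : Finset ι} (hH : #H < Fintype.card ι) (a : ι → F) {c : F}
    (hc : c ≠ 0) :
    (#{x ∈ vanishingVectors F H | a ⬝ᵥ x = c} : ℤ)
      = levelSize (Fintype.card F) (Fintype.card ι) #H (supportType H a) := by
  rcases eq_or_ne a 0 with rfl | ha
  · rw [supportType_eq_zero_iff.mpr rfl, levelSize, if_pos rfl]
    simp [hc.symm]
  have hhyper := card_mul_card_nonvanishingVectors_fiber ∅ a hc
  have hnonvan := card_mul_card_nonvanishingVectors_fiber H a hc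
  have hsplit := card_vanishingVectors_fiber_add H a hc
  zify at hsplit
  rw [card_empty, supportType_empty ha, charSumValue, zero_add, if_pos rfl, Nat.sub_zero,
    pow_zero] at hhyper
  rw [levelSize, if_neg (supportType_eq_zero_iff.not.mpr ha)]
  have hq : (Fintype.card F : ℤ) ≠ 0 := Nat.cast_ne_zero.mpr Fintype.card_ne_zero
  generalize (Fintype.card F : ℤ) = q at *
  have hpow : q ^ Fintype.card ι = q ^ (Fintype.card ι - #H) * q ^ #H := by
    rw [← pow_add, Nat.sub_add_cancel hH.le]
  have hpow' : q ^ (Fintype.card ι - #H) = q * q ^ (Fintype.card ι - #H - 1) := by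
    rw [← pow_succ', Nat.sub_add_cancel (Nat.sub_pos_of_lt hH)]
  rw [hpow, hpow'] at hhyper
  rw [hpow'] at hnonvan
  refine mul_left_cancel₀ hq ?_
  linear_combination q * hsplit + hhyper - hnonvan

end VanishingVectors

section Weights

theorem card_filter_ne_zero_of_fiber {α F : Type*} [Zero F] [Fintype F] [DecidableEq F]
    {D : Finset α} {g : α → F} {X : ℤ} (hX : ∀ c ≠ 0, (#{x ∈ D | g x = c} : ℤ) = X) :
    (#{x ∈ D | g x ≠ 0} : ℤ) = ((Fintype.card F : ℤ) - 1) * X := by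
  have hmaps : Set.MapsTo g ({x ∈ D | g x ≠ 0} : Finset α) (univ.erase (0 : F)) := fun x hx =>
    mem_erase.mpr ⟨(mem_filter.mp hx).2, mem_univ _⟩
  have hfiber : ∀ c ∈ univ.erase (0 : F), (#{x ∈ {x ∈ D | g x ≠ 0} | g x = c} : ℤ) = X := by
    intro c hc
    rw [← hX c (ne_of_mem_erase hc), filter_filter]
    simp only [and_iff_right_of_imp fun h : g _ = c => h.trans_ne (ne_of_mem_erase hc)]
  rw [card_eq_sum_card_fiberwise hmaps, Nat.cast_sum, sum_congr rfl hfiber, sum_const,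
    card_erase_of_mem (mem_univ _), card_univ, nsmul_eq_mul, Nat.cast_pred Fintype.card_pos]

theorem card_filter_add_ne_zero_of_fiber {α F : Type*} [AddGroup F] [DecidableEq F]
    {D : Finset α} {g : α → F} {X : ℤ} (hX : ∀ c ≠ 0, (#{x ∈ D | g x = c} : ℤ) = X) {b : F}
    (hb : b ≠ 0) :
    (#{x ∈ D | g x + b ≠ 0} : ℤ) = #D - X := by
  rw [← hX (-b) (neg_ne_zero.mpr hb), ← card_filter_add_card_filter_not (s := D) (g · = -b)]
  simp only [ne_eq, add_eq_zero_iff_eq_neg]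
  lia

end Weights

section Arithmetic

/-- The weight of a form of support type `j` on the vectors with a zero among `h` given coordinates,
that is, `w` for `j = h + 1` and `w_j` for `1 ≤ j ≤ h`. -/
def formWeight (q : ℤ) (k h j : ℕ) : ℤ := (q - 1) * levelSize q k h j

/-- The weight `W(f, b)` as a function of the support type `j` of `f` and of whether `b = 0`. -/
def classWeight (q : ℤ) (k h : ℕ) : ℕ × Bool → ℤ
  | (j, true) => 2 * formWeight q k h j
  | (j, false) => vanishingLength q k h + formWeight q k h j * (q - 2) / (q - 1)

theorem mul_psi (q s : ℕ) :
    (q : ℤ) * psi q s = ((q : ℤ) - 1) ^ s + (-1) ^ s * ((q : ℤ) - 1) := by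
  refine Int.mul_ediv_cancel' ?_
  have hdvd : (q : ℤ) ∣ ((q : ℤ) - 1) ^ s - (-1) ^ s := by
    simpa using sub_dvd_pow_sub_pow ((q : ℤ) - 1) (-1) s
  have hsum : ((q : ℤ) - 1) ^ s + (-1) ^ s * ((q : ℤ) - 1)
      = ((q : ℤ) - 1) ^ s - (-1) ^ s + (-1) ^ s * q := by ring
  exact hsum ▸ hdvd.add (dvd_mul_left _ _)

theorem levelSize_of_ne_zero (q : ℤ) (k h : ℕ) {j : ℕ} (hj : j ≠ 0) :
    levelSize q k h j = q ^ (k - h - 1) * (q ^ h - (q - 1) ^ h + charSumValue q h j) :=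
  if_neg hj

theorem formWeight_zero (q : ℤ) (k h : ℕ) : formWeight q k h 0 = 0 := by
  rw [formWeight, levelSize, if_pos rfl, mul_zero]

theorem vanishingLength_eq_of_lt (q : ℤ) {k h : ℕ} (hk : h < k) :
    vanishingLength q k h = q ^ (k - h - 1) * (q * (q ^ h - (q - 1) ^ h)) - 1 := by
  rw [vanishingLength, ← mul_assoc, ← pow_succ, Nat.sub_add_cancel (Nat.sub_pos_of_lt hk)]

theorem formWeight_succ (q : ℤ) {k h : ℕ} (hk : h < k) :
    formWeight q k h (h + 1)
      = vanishingLength q k h - q ^ (k - 1) + q ^ (k - h - 1) * (q - 1) ^ h + 1 := by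
  have hpow : q ^ (k - 1) = q ^ (k - h - 1) * q ^ h := by
    rw [← pow_add]
    congr 1
    lia
  rw [formWeight, levelSize_of_ne_zero _ _ _ h.succ_ne_zero, charSumValue, if_pos rfl,
    vanishingLength_eq_of_lt q hk, hpow]
  ring

theorem formWeight_of_le (q : ℕ) {k h s : ℕ} (hk : h < k) (hs : 1 ≤ s) (hsh : s ≤ h) :
    formWeight q k h s = vanishingLength q k h - (q : ℤ) ^ (k - 1)
      + (q : ℤ) ^ (k - h) * ((q : ℤ) - 1) ^ (h - s) * psi q s + 1 := by
  have hψ := mul_psi q s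
  have hpow : ((q : ℤ) - 1) ^ h = ((q : ℤ) - 1) ^ (h - s) * ((q : ℤ) - 1) ^ s := by
    rw [← pow_add, Nat.sub_add_cancel hsh]
  have hpow₁ : (q : ℤ) ^ (k - 1) = (q : ℤ) ^ (k - h - 1) * (q : ℤ) ^ h := by
    rw [← pow_add]
    congr 1
    lia
  have hpow₂ : (q : ℤ) ^ (k - h) = (q : ℤ) ^ (k - h - 1) * q := by
    rw [← pow_succ, Nat.sub_add_cancel (Nat.sub_pos_of_lt hk)]
  rw [formWeight, levelSize_of_ne_zero _ _ _ (Nat.one_le_iff_ne_zero.mp hs), charSumValue,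
    if_neg (by lia), vanishingLength_eq_of_lt _ hk, hpow₁, hpow₂]
  linear_combination (q : ℤ) ^ (k - h - 1) * hpow
    - (q : ℤ) ^ (k - h - 1) * ((q : ℤ) - 1) ^ (h - s) * hψ

variable {q : ℤ} {k h : ℕ}

theorem classWeight_false (hq : q ≠ 1) (k h j : ℕ) :
    classWeight q k h (j, false) = vanishingLength q k h + (q - 2) * levelSize q k h j := by
  rw [classWeight, formWeight, mul_assoc, Int.mul_ediv_cancel_left _ (sub_ne_zero.mpr hq), mul_comm]

theorem mul_pow_le_pow_sub_pow (hq : 1 ≤ q) (h : ℕ) :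
    h * (q - 1) ^ (h - 1) ≤ q ^ h - (q - 1) ^ h := by
  have := pow_add_mul_le_add_pow (sub_nonneg.mpr hq) (by linarith : 0 ≤ 2 * (q - 1) + 1) h
  rw [sub_add_cancel, mul_one] at this
  linarith

theorem abs_charSumValue_le (hq : 2 ≤ q) (h : ℕ) {j : ℕ} (hj : j ≠ 0) :
    |charSumValue q h j| ≤ (q - 1) ^ (h - 1) := by
  have hm : 1 ≤ q - 1 := by linarith
  unfold charSumValue
  split_ifs
  · rw [abs_zero]
    positivity
  · rw [abs_mul, abs_neg_one_pow, one_mul, abs_of_pos (by positivity)]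
    exact pow_le_pow_right₀ hm (by lia)

theorem charSumValue_injOn (hq : 2 < q) (h : ℕ) :
    Set.InjOn (charSumValue q h) (Set.Iic (h + 1)) := by
  have habs : ∀ j, |((-1) ^ j * (q - 1) ^ (h - j) : ℤ)| = (q - 1) ^ (h - j) := fun j => by
    rw [abs_mul, abs_neg_one_pow, one_mul, abs_of_pos (pow_pos (by linarith) _)]
  have hne : ∀ j, ((-1) ^ j * (q - 1) ^ (h - j) : ℤ) ≠ 0 := fun j =>
    mul_ne_zero (by simp) (pow_ne_zero _ (by linarith))
  intro i hi j hj hij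
  rw [Set.mem_Iic] at hi hj
  unfold charSumValue at hij
  split_ifs at hij with hi' hj' hj'
  · rw [hi', hj']
  · exact absurd hij.symm (hne j)
  · exact absurd hij (hne i)
  · have hexp := congrArg abs hij
    rw [habs, habs] at hexp
    have := pow_right_injective₀ (by linarith : 0 < q - 1) (by linarith) hexp
    lia

theorem levelSize_pos (hq : 2 ≤ q) (k : ℕ) (hh : 2 ≤ h) {j : ℕ} (hj : j ≠ 0) :
    0 < levelSize q k h j := by
  have hdelta := (abs_le.mp (abs_charSumValue_le hq h hj)).1
  have hbernoulli := mul_pow_le_pow_sub_pow (by linarith : 1 ≤ q) h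
  have hpow : 0 < (q - 1) ^ (h - 1) := pow_pos (by linarith) _
  have hh' : (2 : ℤ) * (q - 1) ^ (h - 1) ≤ h * (q - 1) ^ (h - 1) := by
    gcongr
    exact_mod_cast hh
  rw [levelSize_of_ne_zero _ _ _ hj]
  exact mul_pos (pow_pos (by linarith) _) (by linarith)

theorem levelSize_nonneg (hq : 2 ≤ q) (k : ℕ) (hh : 2 ≤ h) (j : ℕ) : 0 ≤ levelSize q k h j := by
  rcases eq_or_ne j 0 with rfl | hj
  · rfl
  · exact (levelSize_pos hq k hh hj).le

theorem levelSize_injOn (hq : 2 < q) (k : ℕ) (hh : 2 ≤ h) :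
    Set.InjOn (levelSize q k h) (Set.Iic (h + 1)) := by
  have hzero : ∀ j, levelSize q k h j = 0 → j = 0 := fun j hj =>
    by_contra fun hj₀ => (levelSize_pos hq.le k hh hj₀).ne' hj
  intro i hi j hj hij
  rcases eq_or_ne i 0 with rfl | hi₀
  · exact (hzero j hij.symm).symm
  rcases eq_or_ne j 0 with rfl | hj₀
  · exact hzero i hij
  rw [levelSize_of_ne_zero _ _ _ hi₀, levelSize_of_ne_zero _ _ _ hj₀] at hij
  exact charSumValue_injOn hq h hi hj
    (add_left_cancel (mul_left_cancel₀ (pow_ne_zero _ (by linarith)) hij))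

theorem vanishingLength_pos (hq : 2 ≤ q) (k : ℕ) (hh : 2 ≤ h) : 0 < vanishingLength q k h := by
  have hbernoulli := mul_pow_le_pow_sub_pow (by linarith : 1 ≤ q) h
  have hh' : (2 : ℤ) * 1 ≤ h * (q - 1) ^ (h - 1) := by
    gcongr
    · exact_mod_cast hh
    · exact one_le_pow₀ (by linarith)
  have hpow : 1 ≤ q ^ (k - h) := one_le_pow₀ (by linarith)
  have : 1 * 2 ≤ q ^ (k - h) * (q ^ h - (q - 1) ^ h) := by
    gcongr
    linarith
  rw [vanishingLength]
  linarith

theorem vanishingLength_lt_two_mul_formWeight (hq : 3 < q) (hk : h < k) (hh : 3 ≤ h) {j : ℕ}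
    (hj : j ≠ 0) : vanishingLength q k h < 2 * formWeight q k h j := by
  have hdelta := (abs_le.mp (abs_charSumValue_le (by linarith : 2 ≤ q) h hj)).1
  have hbernoulli : 3 * (q - 1) ^ (h - 1) ≤ q ^ h - (q - 1) ^ h := by
    refine le_trans ?_ (mul_pow_le_pow_sub_pow (by linarith) h)
    gcongr
    · exact pow_nonneg (by linarith) _
    · exact_mod_cast hh
  have hpow : 0 < (q - 1) ^ (h - 1) := pow_pos (by linarith) _
  have hgap : 0 ≤ q ^ (k - h - 1)
      * ((q - 2) * (q ^ h - (q - 1) ^ h) + 2 * (q - 1) * charSumValue q h j) := by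
    refine mul_nonneg (pow_nonneg (by linarith) _) ?_
    calc (0 : ℤ) ≤ (q - 4) * (q - 1) ^ (h - 1) := mul_nonneg (by lia) hpow.le
      _ = (q - 2) * (3 * (q - 1) ^ (h - 1)) + 2 * (q - 1) * -(q - 1) ^ (h - 1) := by ring
      _ ≤ _ := by gcongr <;> linarith
  rw [vanishingLength_eq_of_lt q hk, formWeight, levelSize_of_ne_zero _ _ _ hj]
  linarith

theorem two_mul_charSumValue_ne (hq : 3 < q) (h i j : ℕ) :
    2 * (q - 1) * charSumValue q h i ≠ (q - 2) * charSumValue q h j - 1 := by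
  -- Modulo `q - 1`, equality forces `charSumValue q h j = -1`, so `charSumValue q h i = -1 / 2`.
  intro heq
  have hdvd : q - 1 ∣ charSumValue q h j + 1 :=
    ⟨charSumValue q h j - 2 * charSumValue q h i, by linear_combination heq⟩
  have hsmall : ∀ c : ℤ, 0 < c → c < 3 → ¬ q - 1 ∣ c := fun c hc hc' hd => by
    have := Int.le_of_dvd hc hd
    lia
  unfold charSumValue at hdvd
  split_ifs at hdvd with hj
  · exact hsmall 1 (by norm_num) (by norm_num) hdvd
  by_cases hlt : h - j = 0
  · have hval : charSumValue q h j = (-1) ^ j := by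
      rw [charSumValue, if_neg hj, hlt, pow_zero, mul_one]
    rw [hlt, pow_zero, mul_one] at hdvd
    rcases neg_one_pow_eq_or ℤ j with hsign | hsign
    · rw [hsign] at hdvd
      exact hsmall 2 (by norm_num) (by norm_num) hdvd
    · have hzero : (q - 1) * (2 * charSumValue q h i + 1) = 0 := by
        linear_combination heq + (q - 2) * hval + (q - 2) * hsign
      rcases mul_eq_zero.mp hzero with h₀ | h₀ <;> lia
  · exact hsmall 1 (by norm_num) (by norm_num)
      ((Int.dvd_add_right ((dvd_pow_self _ hlt).mul_left _)).mp hdvd)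

theorem two_mul_formWeight_ne (hq : 3 < q) (hk : h < k) (hh : 3 ≤ h) (i j : ℕ) :
    2 * formWeight q k h i ≠ vanishingLength q k h + (q - 2) * levelSize q k h j := by
  rcases eq_or_ne i 0 with rfl | hi
  · have hpos := vanishingLength_pos (by linarith : 2 ≤ q) k (by lia : 2 ≤ h)
    have hnonneg := levelSize_nonneg (by linarith : 2 ≤ q) k (by lia : 2 ≤ h) j
    rw [formWeight_zero, mul_zero]
    exact (add_pos_of_pos_of_nonneg hpos (mul_nonneg (by linarith) hnonneg)).ne
  rcases eq_or_ne j 0 with rfl | hj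
  · simp only [levelSize, if_true, mul_zero, add_zero]
    exact (vanishingLength_lt_two_mul_formWeight hq hk hh hi).ne'
  rw [formWeight, levelSize_of_ne_zero _ _ _ hi, levelSize_of_ne_zero _ _ _ hj,
    vanishingLength_eq_of_lt q hk]
  intro heq
  have hdvd : q ^ (k - h - 1) ∣ 1 :=
    ⟨(q - 2) * charSumValue q h j - 2 * (q - 1) * charSumValue q h i, by
      linear_combination heq⟩
  have hone : q ^ (k - h - 1) = 1 :=
    Int.eq_one_of_dvd_one (pow_nonneg (by linarith) _) hdvd
  rw [hone] at heq
  exact two_mul_charSumValue_ne hq h i j (by linear_combination heq)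

theorem classWeight_injOn (hq : 3 < q) (hk : h < k) (hh : 3 ≤ h) :
    Set.InjOn (classWeight q k h) {v | v.1 ≤ h + 1} := by
  have hcancel : ∀ c : ℤ, c ≠ 0 → ∀ i ≤ h + 1, ∀ j ≤ h + 1,
      c * levelSize q k h i = c * levelSize q k h j → i = j := fun c hc i hi j hj hij =>
    levelSize_injOn (by linarith) k (by lia) hi hj (mul_left_cancel₀ hc hij)
  rintro ⟨i, y⟩ hi ⟨j, z⟩ hj hij
  cases y <;> cases z
  · rw [classWeight_false (by linarith), classWeight_false (by linarith)] at hij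
    rw [hcancel (q - 2) (by linarith) i hi j hj (add_left_cancel hij)]
  · rw [classWeight_false (by linarith)] at hij
    exact absurd hij.symm (two_mul_formWeight_ne hq hk hh j i)
  · rw [classWeight_false (by linarith)] at hij
    exact absurd hij (two_mul_formWeight_ne hq hk hh i j)
  · simp only [classWeight, formWeight, ← mul_assoc] at hij
    rw [hcancel (2 * (q - 1)) (by lia) i hi j hj hij]

end Arithmetic

section WeightDistribution

/-- The pairs `(j, z)` in the order in which the weights `classWeight q k h (j, z)` are listed in
the theorem: `0, n, 2w, n + w(q-2)/(q-1)`, then the `2w_s`, then the `n + w_s(q-2)/(q-1)`. -/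
def pairClasses (h : ℕ) : List (ℕ × Bool) :=
  [(0, true), (0, false), (h + 1, true), (h + 1, false)]
    ++ (List.ofFn fun s : Fin h => ((s : ℕ) + 1, true))
    ++ List.ofFn fun s : Fin h => ((s : ℕ) + 1, false)

theorem mem_pairClasses {h : ℕ} {v : ℕ × Bool} : v ∈ pairClasses h ↔ v.1 ≤ h + 1 := by
  obtain ⟨j, z⟩ := v
  have hmid : (∃ s : Fin h, (s : ℕ) + 1 = j) ↔ 1 ≤ j ∧ j ≤ h :=
    ⟨fun ⟨s, hs⟩ => by lia, fun ⟨hj, _⟩ => ⟨⟨j - 1, by lia⟩, Nat.sub_add_cancel hj⟩⟩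
  simp only [pairClasses, List.mem_append, List.mem_cons, List.mem_ofFn, Prod.mk.injEq,
    exists_and_right, hmid, List.not_mem_nil, or_false]
  cases z <;> simp only [reduceCtorEq, and_false, and_true, or_false, false_or] <;> lia

theorem nodup_pairClasses (h : ℕ) : (pairClasses h).Nodup := by
  have hofFn : ∀ z : Bool, (List.ofFn fun s : Fin h => ((s : ℕ) + 1, z)).Nodup := fun z =>
    List.nodup_ofFn.mpr fun s t hst => Fin.ext (by simpa using hst)
  refine ((List.Nodup.append (by simp) (hofFn true) ?_).append (hofFn false) ?_)
  · simpa [List.disjoint_left] using fun s : Fin h => s.2.ne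
  · simpa [List.disjoint_left] using fun s : Fin h => s.2.ne

theorem nodup_map_classWeight_pairClasses {q : ℤ} {k h : ℕ} (hq : 3 < q) (hk : h < k)
    (hh : 3 ≤ h) : ((pairClasses h).map (classWeight q k h)).Nodup :=
  (nodup_pairClasses h).map_on fun _ hu _ hv =>
    classWeight_injOn hq hk hh (mem_pairClasses.mp hu) (mem_pairClasses.mp hv)

theorem map_classWeight_pairClasses (q : ℤ) (k h : ℕ) :
    (pairClasses h).map (classWeight q k h)
      = [0, vanishingLength q k h, 2 * formWeight q k h (h + 1),
          vanishingLength q k h + formWeight q k h (h + 1) * (q - 2) / (q - 1)]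
        ++ (List.ofFn fun s : Fin h => 2 * formWeight q k h (s + 1))
        ++ List.ofFn fun s : Fin h =>
          vanishingLength q k h + formWeight q k h (s + 1) * (q - 2) / (q - 1) := by
  simp [pairClasses, classWeight, formWeight_zero, Function.comp_def]

variable {ι F : Type*} [Fintype ι] [DecidableEq ι] [DecidableEq F]

/-- The weight of the codeword attached to `(f, b)` in the code with defining set
`{(x, 0) : x ∈ D} ∪ {(x, 1) : x ∈ D}`. -/
def pairWeight {ι F : Type*} [CommSemiring F] [DecidableEq F] (D : Finset (ι → F))
    (f : Module.Dual F (ι → F)) (b : F) : ℕ :=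
  #{x ∈ D | f x ≠ 0} + #{x ∈ D | f x + b ≠ 0}

/-- The invariant of a pair `(f, b)` that determines its weight: the support type of the coefficient
vector of `f` and whether `b = 0`. -/
def pairClass [CommSemiring F] (H : Finset ι) (p : Module.Dual F (ι → F) × F) : ℕ × Bool :=
  (supportType H ((dotProductEquiv F ι).symm p.1), decide (p.2 = 0))

theorem pairClass_fst_le [CommSemiring F] (H : Finset ι)
    (p : Module.Dual F (ι → F) × F) :
    (pairClass H p).1 ≤ #H + 1 :=
  supportType_le H _

variable [Field F] [Fintype F] {H : Finset ι}

theorem pairWeight_vanishingVectors (hH : H.Nonempty) (hlt : #H < Fintype.card ι)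
    (p : Module.Dual F (ι → F) × F) :
    (pairWeight (vanishingVectors F H) p.1 p.2 : ℤ)
      = classWeight (Fintype.card F) (Fintype.card ι) #H (pairClass H p) := by
  obtain ⟨f, b⟩ := p
  obtain ⟨a, rfl⟩ := (dotProductEquiv F ι).surjective f
  have hfiber := fun c => card_vanishingVectors_fiber (F := F) hlt a (c := c)
  have hq : (Fintype.card F : ℤ) ≠ 1 := by exact_mod_cast Fintype.one_lt_card.ne'
  rw [pairWeight, pairClass, LinearEquiv.symm_apply_apply]
  simp only [dotProductEquiv_apply_apply]
  push_cast
  rw [card_filter_ne_zero_of_fiber hfiber]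
  rcases eq_or_ne b 0 with rfl | hb
  · simp only [add_zero, decide_true, classWeight, formWeight]
    rw [card_filter_ne_zero_of_fiber hfiber]
    ring
  · rw [card_filter_add_ne_zero_of_fiber hfiber hb, card_vanishingVectors hH,
      decide_eq_false hb, classWeight_false hq]
    ring

theorem natCard_pairClass_eq (H : Finset ι) (j : ℕ) (z : Bool) :
    Nat.card {p : Module.Dual F (ι → F) × F // pairClass H p = (j, z)}
      = #{a : ι → F | supportType H a = j} * if z then 1 else Fintype.card F - 1 := by
  have hb : #{b : F | decide (b = 0) = z} = if z then 1 else Fintype.card F - 1 := by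
    cases z
    · simp [filter_ne']
    · simp [filter_eq']
  rw [← hb, ← card_product, ← Nat.subtype_card (p := fun r : (ι → F) × F =>
    (supportType H r.1, decide (r.2 = 0)) = (j, z)) _ fun r => by simp]
  exact Nat.card_congr (((dotProductEquiv F ι).symm.toEquiv.prodCongr
    (Equiv.refl F)).subtypeEquiv fun p => Iff.rfl)

theorem natCard_pairWeight_eq (hF : 3 < Fintype.card F) (hH : 3 ≤ #H) (hlt : #H < Fintype.card ι)
    {j : ℕ} (hj : j ≤ #H + 1) (z : Bool) :
    Nat.card {p : Module.Dual F (ι → F) × F // (pairWeight (vanishingVectors F H) p.1 p.2 : ℤ)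
        = classWeight (Fintype.card F) (Fintype.card ι) #H (j, z)}
      = #{a : ι → F | supportType H a = j} * if z then 1 else Fintype.card F - 1 := by
  have hne : H.Nonempty := card_pos.mp (by lia)
  rw [← natCard_pairClass_eq]
  simp_rw [pairWeight_vanishingVectors hne hlt]
  exact Nat.card_congr (Equiv.subtypeEquivRight fun p =>
    (classWeight_injOn (by exact_mod_cast hF) hlt hH).eq_iff (pairClass_fst_le H p) hj)

theorem natCard_pairWeight_eq_of_le (hF : 3 < Fintype.card F) (hH : 3 ≤ #H)
    (hlt : #H < Fintype.card ι) {s : ℕ} (hs : s ≤ #H) (z : Bool) :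
    Nat.card {p : Module.Dual F (ι → F) × F // (pairWeight (vanishingVectors F H) p.1 p.2 : ℤ)
        = classWeight (Fintype.card F) (Fintype.card ι) #H (s, z)}
      = (#H).choose s * (Fintype.card F - 1) ^ s * if z then 1 else Fintype.card F - 1 := by
  rw [natCard_pairWeight_eq hF hH hlt (hs.trans (Nat.le_succ _)), card_filter_supportType_eq H hs]

theorem natCard_pairWeight_eq_succ (hF : 3 < Fintype.card F) (hH : 3 ≤ #H)
    (hlt : #H < Fintype.card ι) (z : Bool) :
    Nat.card {p : Module.Dual F (ι → F) × F // (pairWeight (vanishingVectors F H) p.1 p.2 : ℤ)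
        = classWeight (Fintype.card F) (Fintype.card ι) #H (#H + 1, z)}
      = (Fintype.card F ^ Fintype.card ι - Fintype.card F ^ #H)
        * if z then 1 else Fintype.card F - 1 := by
  rw [natCard_pairWeight_eq hF hH hlt le_rfl, card_filter_supportType_eq_succ]

theorem pairWeight_vanishingVectors_mem (hH : H.Nonempty) (hlt : #H < Fintype.card ι)
    (p : Module.Dual F (ι → F) × F) :
    (pairWeight (vanishingVectors F H) p.1 p.2 : ℤ)
      ∈ (pairClasses #H).map (classWeight (Fintype.card F) (Fintype.card ι) #H) := by
  rw [pairWeight_vanishingVectors hH hlt]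
  exact List.mem_map_of_mem (mem_pairClasses.mpr (pairClass_fst_le H p))

theorem exists_card_eq_mem_vanishingVectors_iff (F : Type*) [CommMonoidWithZero F]
    [NoZeroDivisors F] [Nontrivial F] [Fintype F] [DecidableEq F] {k h : ℕ} (hk : h ≤ k) :
    ∃ H : Finset (Fin k), #H = h ∧ ∀ x, x ∈ vanishingVectors F H
      ↔ x ≠ 0 ∧ ∏ i : Fin h, x (Fin.castLE hk i) = 0 :=
  ⟨univ.map (Fin.castLEEmb hk), by simp, fun x => by simp [vanishingVectors, prod_eq_zero_iff]⟩

end WeightDistribution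

theorem stmt19 (q : ℕ) (hq : 3 < q) (F : Type*) [Field F] [Fintype F]
    (hF : Fintype.card F = q)
    (k h : ℕ) (hh : 3 ≤ h) (hhk : h < k)
    (D4 : Set (Fin k → F))
    (hD4 : D4 = {x | x ≠ 0 ∧ ∏ i : Fin h, x (Fin.castLE hhk.le i) = 0})
    (n : ℕ) (hn : n = Nat.card D4)
    (hnval : (n : ℤ) = (q : ℤ) ^ (k - h) * ((q : ℤ) ^ h - ((q : ℤ) - 1) ^ h) - 1)
    -- the weight of the codeword of C_{[D₄,D₄]~} attached to the pair (f,b)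
    (W : ((Fin k → F) →ₗ[F] F) → F → ℕ)
    (hW : ∀ f b, W f b = Nat.card {x : Fin k → F // x ∈ D4 ∧ f x ≠ 0}
      + Nat.card {x : Fin k → F // x ∈ D4 ∧ f x + b ≠ 0})
    -- w = n − q^{k−1} + q^{k−h−1}(q−1)^h + 1
    (w : ℤ) (hw : w = (n : ℤ) - (q : ℤ) ^ (k - 1) + (q : ℤ) ^ (k - h - 1) * ((q : ℤ) - 1) ^ h + 1)
    -- w_s = n − q^{k−1} + q^{k−h}(q−1)^{h−s}ψ_s + 1
    (ws : ℕ → ℤ)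
    (hws : ∀ s, ws s = (n : ℤ) - (q : ℤ) ^ (k - 1)
      + (q : ℤ) ^ (k - h) * ((q : ℤ) - 1) ^ (h - s) * psi q s + 1)
    -- the list of the weights 0, n, 2w, n + w(q−2)/(q−1), 2w_s, n + w_s(q−2)/(q−1)
    (L : List ℤ)
    (hL : L = [0, (n : ℤ), 2 * w, (n : ℤ) + w * ((q : ℤ) - 2) / ((q : ℤ) - 1)]
      ++ (List.ofFn fun s : Fin h => 2 * ws (s + 1))
      ++ (List.ofFn fun s : Fin h => (n : ℤ) + ws (s + 1) * ((q : ℤ) - 2) / ((q : ℤ) - 1))) :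
    -- the listed weights are pairwise distinct
    L.Nodup
    ∧ Nat.card {p : ((Fin k → F) →ₗ[F] F) × F // (W p.1 p.2 : ℤ) = 0} = 1
    ∧ Nat.card {p : ((Fin k → F) →ₗ[F] F) × F // (W p.1 p.2 : ℤ) = (n : ℤ)} = q - 1
    ∧ (∀ s : ℕ, 1 ≤ s → s ≤ h →
        Nat.card {p : ((Fin k → F) →ₗ[F] F) × F // (W p.1 p.2 : ℤ) = 2 * ws s}
          = Nat.choose h s * (q - 1) ^ s)
    ∧ (∀ s : ℕ, 1 ≤ s → s ≤ h →
        Nat.card {p : ((Fin k → F) →ₗ[F] F) × F //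
            (W p.1 p.2 : ℤ) = (n : ℤ) + ws s * ((q : ℤ) - 2) / ((q : ℤ) - 1)}
          = Nat.choose h s * (q - 1) ^ (s + 1))
    ∧ Nat.card {p : ((Fin k → F) →ₗ[F] F) × F // (W p.1 p.2 : ℤ) = 2 * w} = q ^ k - q ^ h
    ∧ Nat.card {p : ((Fin k → F) →ₗ[F] F) × F //
          (W p.1 p.2 : ℤ) = (n : ℤ) + w * ((q : ℤ) - 2) / ((q : ℤ) - 1)}
        = (q ^ k - q ^ h) * (q - 1)
    -- and W takes no other values
    ∧ (∀ p : ((Fin k → F) →ₗ[F] F) × F, (W p.1 p.2 : ℤ) ∈ L) := by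
  classical
  subst hF
  obtain ⟨H, rfl, hD⟩ := exists_card_eq_mem_vanishingVectors_iff F hhk.le
  have hlt : #H < Fintype.card (Fin k) := by rwa [Fintype.card_fin]
  obtain rfl : W = pairWeight (vanishingVectors F H) := by
    funext f b
    rw [hW, hD4, pairWeight]
    congr 1 <;> exact Nat.subtype_card _ fun x => mem_filter.trans (and_congr_left' (hD x))
  have hn' : (n : ℤ) = vanishingLength (Fintype.card F) k #H := hnval
  have hw' : w = formWeight (Fintype.card F) k #H (#H + 1) := by
    rw [hw, hn', formWeight_succ _ hhk]
  have hws' : ∀ s, 1 ≤ s → s ≤ #H → ws s = formWeight (Fintype.card F) k #H s := fun s hs hsh => by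
    rw [hws, hn', formWeight_of_le _ hhk hs hsh]
  have hlist : L = (pairClasses #H).map (classWeight (Fintype.card F) k #H) := by
    rw [hL, map_classWeight_pairClasses, hw', hn']
    simp only [hws' _ (Nat.le_add_left _ _) (Nat.succ_le_of_lt (Fin.is_lt _))]
  have hle := fun s hs => natCard_pairWeight_eq_of_le (s := s) hq hh hlt hs
  have hsucc := natCard_pairWeight_eq_succ hq hh hlt
  rw [hlist]
  refine ⟨nodup_map_classWeight_pairClasses (by exact_mod_cast hq) hhk hh, ?_, ?_,
    fun s hs hsh => ?_, fun s hs hsh => ?_, ?_, ?_, fun p => ?_⟩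
  · simpa [classWeight, formWeight_zero] using hle 0 (Nat.zero_le _) true
  · simpa [classWeight, formWeight_zero, hn'] using hle 0 (Nat.zero_le _) false
  · simpa [classWeight, hws' s hs hsh] using hle s hsh true
  · simpa [classWeight, hws' s hs hsh, hn', pow_succ, mul_assoc] using hle s hsh false
  · simpa [classWeight, hw'] using hsucc true
  · simpa [classWeight, hw', hn'] using hsucc false
  · simpa using pairWeight_vanishingVectors_mem (card_pos.mp (by lia)) hlt p
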